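/- Let y : [x_0 + r, L_0] → ℝ be twice continuously differentiable with y''(x) + 6·y(x)² - x = 0 on [x_0 + r, L_0], and suppose |y(L_0) - y_0(L_0)| ≤ 1.75×10^{-7} and |y'(L_0) - y_0'(L_0)| ≤ 1.61×10^{-7}. Then for every x ∈ [x_0 + r, L_0], (x - x_0)^{16/5}·|y(x) - y_0(x)| ≤ 4.01×10^{-6} and |y'(x) - y_0'(x)| ≤ 3.76×10^{-5}; in particular |y(x_0 + r) - y_0(x_0 + r)| ≤ 1.26×10^{-5}. -/

import Mathlib

/-!
Write `s = x - x₀`, `u = y - y₀`, `w = y' - y₀'`. Subtracting the equations gives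
`u' = w`, `w' = -12 y₀ u - 6 u² - R` with the residual `R = y₀'' + 6 y₀² - x`.
Going backwards from `L₀`, the error grows no faster than the barriers
`U = A s⁻⁴` and `W = 2.7 A s⁻⁵` with `A = 2.26×10⁻⁶`:

* `U' = -4 A s⁻⁵ < -W`, and since `0 ≤ P_u ≤ 2 / s²` gives `|12 y₀| ≤ 12 / s²`, also
  `W' = -13.5 A s⁻⁶ < -(12 s⁻² U + 6 U² + |R|)`, as long as `|R| ≤ 2×10⁻⁷ / s²`;
* hence `|u| < U` and `|w| < W` on the whole interval, because at the last point where one of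
  these inequalities fails the derivatives point the wrong way (`barrier_pos`).

The claimed bounds follow by comparing `U`, `W` with them on `0.7 ≤ s ≤ 1.8942`.

The bound on `R` (`residual_bound`) is exact rational arithmetic. In the variable
`v ∈ [-1, 1]` with `τ = (v - 5) / 6`, the double poles cancel and `s² R` is a polynomial in `v`.
Re-expanding it around the midpoints of `[-1, 0]` and `[0, 1]` and summing the absolute values of
the coefficients gives the estimate. Polynomials are lists of rational coefficients, so that the
final inequalities are decidable and are evaluated by the kernel.
-/

open Set

noncomputable section

/-- The coefficients `c_0, …, c_22` of the polynomial `P_u`. -/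
def cP : ℕ → ℝ
  | 0 => 335867/539062
  | 1 => 419712/989125
  | 2 => -352463/3539236
  | 3 => 60789/1703279
  | 4 => -132842/11825541
  | 5 => 43961/54574472
  | 6 => 39599/12036926
  | 7 => -213665/48625258
  | 8 => 61644/14973337
  | 9 => -107283/33444500
  | 10 => 44761/18892011
  | 11 => -28249/13550715
  | 12 => 20641/14839893
  | 13 => 13459/92774551
  | 14 => -4992/34838093
  | 15 => -11771/8149937
  | 16 => 24115/27631671
  | 17 => 42106/39550107
  | 18 => -21163/32637441
  | 19 => -9782/15918509
  | 20 => 11581/32652169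
  | 21 => 14692/88640147
  | 22 => -12278/123249611
  | _ => 0

/-- The polynomial `P_u(t) = Σ_{k=0}^{22} c_k t^k`. -/
def Pu (t : ℝ) : ℝ := ∑ k ∈ Finset.range 23, cP k * t ^ k

def x₀ : ℝ := -770766/323285
def rP1 : ℝ := 7/10
def LP1 : ℝ := 11/2
def L₀ : ℝ := -49/100

/-- `τ(x) = (x - (L + x₀ + r)/2)/((L - x₀ - r)/2)`, mapping `[x₀+r, L]` onto `[-1,1]`. -/
def τP1 (x : ℝ) : ℝ := (x - (LP1 + x₀ + rP1) / 2) / ((LP1 - x₀ - rP1) / 2)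

/-- `y₀(x) = -1/(x-x₀)² + P_u(τ(x))` on `[x₀+r, L]`. -/
def y₀ (x : ℝ) : ℝ := -1 / (x - x₀) ^ 2 + Pu (τP1 x)

/-! ### Polynomials as lists of rational coefficients -/

/-- The value at `v` of the polynomial whose coefficients, constant term first, are listed. -/
def polyEval : List ℚ → ℝ → ℝ
  | [], _ => 0
  | a :: p, v => a + v * polyEval p v

def polyAdd : List ℚ → List ℚ → List ℚ
  | [], q => q
  | p, [] => p
  | a :: p, b :: q => (a + b) :: polyAdd p q

def polyScale (c : ℚ) : List ℚ → List ℚ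
  | [] => []
  | a :: p => (c * a) :: polyScale c p

def polyMul : List ℚ → List ℚ → List ℚ
  | [], _ => []
  | a :: p, q => polyAdd (polyScale a q) (0 :: polyMul p q)

/-- The composition `p ∘ q`. -/
def polyComp : List ℚ → List ℚ → List ℚ
  | [], _ => []
  | a :: p, q => polyAdd [a] (polyMul q (polyComp p q))

def polyDeriv : List ℚ → List ℚ
  | [] => []
  | _ :: p => polyAdd p (0 :: polyDeriv p)

/-- The sum of the absolute values of the coefficients, a bound for the polynomial on `[-1, 1]`. -/
def polyNorm : List ℚ → ℚ
  | [] => 0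
  | a :: p => |a| + polyNorm p

lemma polyEval_add (p q : List ℚ) (v : ℝ) :
    polyEval (polyAdd p q) v = polyEval p v + polyEval q v := by
  induction p generalizing q with
  | nil => simp [polyAdd, polyEval]
  | cons a p ih =>
    cases q with
    | nil => simp [polyAdd, polyEval]
    | cons b q => simp only [polyAdd, polyEval, ih]; push_cast; ring

lemma polyEval_scale (c : ℚ) (p : List ℚ) (v : ℝ) :
    polyEval (polyScale c p) v = c * polyEval p v := by
  induction p with
  | nil => simp [polyScale, polyEval]
  | cons a p ih => simp only [polyScale, polyEval, ih]; push_cast; ring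

lemma polyEval_mul (p q : List ℚ) (v : ℝ) :
    polyEval (polyMul p q) v = polyEval p v * polyEval q v := by
  induction p with
  | nil => simp [polyMul, polyEval]
  | cons a p ih => simp only [polyMul, polyEval, polyEval_add, polyEval_scale, ih]; push_cast; ring

lemma polyEval_comp (p q : List ℚ) (v : ℝ) :
    polyEval (polyComp p q) v = polyEval p (polyEval q v) := by
  induction p with
  | nil => simp [polyComp, polyEval]
  | cons a p ih => simp [polyComp, polyEval, polyEval_add, polyEval_mul, ih]

lemma hasDerivAt_polyEval (p : List ℚ) (v : ℝ) :
    HasDerivAt (polyEval p) (polyEval (polyDeriv p) v) v := by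
  induction p with
  | nil => exact hasDerivAt_const v (0 : ℝ)
  | cons a p ih =>
    have h := ((hasDerivAt_id v).mul ih).const_add (a : ℝ)
    refine h.congr_deriv ?_
    simp [polyDeriv, polyEval, polyEval_add]

lemma abs_polyEval_le (p : List ℚ) {v : ℝ} (hv : |v| ≤ 1) : |polyEval p v| ≤ polyNorm p := by
  induction p with
  | nil => simp [polyEval, polyNorm]
  | cons a p ih =>
    simp only [polyEval, polyNorm]
    push_cast
    calc |(a : ℝ) + v * polyEval p v| ≤ |(a : ℝ)| + |v| * |polyEval p v| := by
          rw [← abs_mul]; exact abs_add_le _ _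
      _ ≤ |(a : ℝ)| + 1 * (polyNorm p : ℝ) := by gcongr
      _ = _ := by ring

/-! ### The approximate solution and its residual -/

/-- The coefficients of `P_u`. -/
def coeffs : List ℚ :=
  [335867/539062, 419712/989125, -352463/3539236, 60789/1703279, -132842/11825541,
    43961/54574472, 39599/12036926, -213665/48625258, 61644/14973337, -107283/33444500,
    44761/18892011, -28249/13550715, 20641/14839893, 13459/92774551, -4992/34838093,
    -11771/8149937, 24115/27631671, 42106/39550107, -21163/32637441, -9782/15918509,
    11581/32652169, 14692/88640147, -12278/123249611]

lemma Pu_eq (t : ℝ) : Pu t = polyEval coeffs t := by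
  simp only [Pu, Finset.sum_range_succ, Finset.sum_range_zero, cP, coeffs, polyEval]
  push_cast
  ring

/-- `P_u` in the variable `v`, where `τ = (v - 5) / 6`. -/
def puPoly : List ℚ := polyComp coeffs [-5/6, 1/6]

/-- The half-length `(L - x₀ - r) / 2`, so that `s = r + halfLen * (1 + v) / 6`. -/
def halfLen : ℚ := 1161267/323285

/-- `s = x - x₀` as a polynomial in `v`. -/
def sPoly : List ℚ := [7/10 + halfLen/6, halfLen/6]

/-- `x` as a polynomial in `v`. -/
def xPoly : List ℚ := [-770766/323285 + 7/10 + halfLen/6, halfLen/6]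

/-- `s² R` as a polynomial in `v`: it is
`s² (P_u'' + 6 P_u² - x) - 12 P_u`, as the poles of `y₀'' + 6 y₀²` of order four cancel. -/
def resPoly : List ℚ :=
  polyAdd (polyMul (polyMul sPoly sPoly)
      (polyAdd (polyScale ((6/halfLen)^2) (polyDeriv (polyDeriv puPoly)))
        (polyAdd (polyScale 6 (polyMul puPoly puPoly)) (polyScale (-1) xPoly))))
    (polyScale (-12) puPoly)

lemma polyNorm_res_left : polyNorm (polyComp resPoly [-1/2, 1/2]) ≤ 2/10^7 := by
  decide +kernel

lemma polyNorm_res_right : polyNorm (polyComp resPoly [1/2, 1/2]) ≤ 2/10^7 := by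
  decide +kernel

lemma polyNorm_pu : polyNorm (polyAdd puPoly [-18/100]) ≤ 12/100 := by
  decide +kernel

lemma abs_res_le {v : ℝ} (hv : |v| ≤ 1) : |polyEval resPoly v| ≤ 2/10^7 := by
  obtain ⟨h1, h2⟩ := abs_le.mp hv
  rcases le_total v 0 with h0 | h0
  · have := abs_polyEval_le (polyComp resPoly [-1/2, 1/2]) (v := 2 * v + 1)
      (abs_le.mpr ⟨by linarith, by linarith⟩)
    rw [polyEval_comp] at this
    have e : polyEval [-1/2, 1/2] (2 * v + 1) = v := by
      simp only [polyEval]; push_cast; ring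
    rw [e] at this
    exact this.trans ((Rat.cast_le.mpr polyNorm_res_left).trans_eq (by norm_num))
  · have := abs_polyEval_le (polyComp resPoly [1/2, 1/2]) (v := 2 * v - 1)
      (abs_le.mpr ⟨by linarith, by linarith⟩)
    rw [polyEval_comp] at this
    have e : polyEval [1/2, 1/2] (2 * v - 1) = v := by
      simp only [polyEval]; push_cast; ring
    rw [e] at this
    exact this.trans ((Rat.cast_le.mpr polyNorm_res_right).trans_eq (by norm_num))

/-- The affine map sending `x₀ + r` to `-1` and with `τ = (v - 5) / 6`; it maps `[x₀ + r, L₀]`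
into `[-1, 1]`. -/
def vOf (x : ℝ) : ℝ := 6 / halfLen * (x - x₀ - 7/10) - 1

lemma y₀_eq (x : ℝ) : y₀ x = -1 / (x - x₀) ^ 2 + polyEval puPoly (vOf x) := by
  rw [y₀, Pu_eq, puPoly, polyEval_comp]
  congr 2
  simp only [τP1, polyEval, vOf, x₀, LP1, rP1, halfLen]
  push_cast
  ring

/-- The derivative of `y₀`. -/
def y₀d (x : ℝ) : ℝ := 2 / (x - x₀) ^ 3 + 6 / halfLen * polyEval (polyDeriv puPoly) (vOf x)

/-- The second derivative of `y₀`. -/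
def y₀dd (x : ℝ) : ℝ :=
  -6 / (x - x₀) ^ 4 + (6 / halfLen) ^ 2 * polyEval (polyDeriv (polyDeriv puPoly)) (vOf x)

lemma hasDerivAt_comp_vOf (p : List ℚ) (x : ℝ) :
    HasDerivAt (fun x => polyEval p (vOf x)) (6 / halfLen * polyEval (polyDeriv p) (vOf x)) x := by
  have h1 : HasDerivAt vOf (6 / halfLen) x := by
    have := (((hasDerivAt_id x).sub_const x₀).sub_const (7/10)).const_mul (6 / (halfLen : ℝ))
    exact (this.sub_const 1).congr_deriv (mul_one _)
  refine ((hasDerivAt_polyEval p (vOf x)).comp x h1).congr_deriv (by ring)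

lemma hasDerivAt_const_div (c : ℝ) (n : ℕ) {x : ℝ} (hx : x - x₀ ≠ 0) :
    HasDerivAt (fun x => c / (x - x₀) ^ n) (-(n * c) / (x - x₀) ^ (n + 1)) x := by
  have h1 := ((hasDerivAt_id x).sub_const x₀).pow n
  have h2 := (hasDerivAt_const x c).div h1 (pow_ne_zero n hx)
  refine h2.congr_deriv ?_
  rcases n with _ | n
  · simp
  · simp only [id, Pi.pow_apply, Nat.add_sub_cancel]
    field_simp
    ring

lemma hasDerivAt_y₀ {x : ℝ} (hx : x - x₀ ≠ 0) : HasDerivAt y₀ (y₀d x) x := by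
  rw [show y₀ = fun x => -1 / (x - x₀) ^ 2 + polyEval puPoly (vOf x) from funext y₀_eq]
  refine ((hasDerivAt_const_div (-1) 2 hx).add (hasDerivAt_comp_vOf puPoly x)).congr_deriv ?_
  rw [y₀d]; norm_num

lemma hasDerivAt_y₀d {x : ℝ} (hx : x - x₀ ≠ 0) : HasDerivAt y₀d (y₀dd x) x := by
  refine ((hasDerivAt_const_div 2 3 hx).add
    ((hasDerivAt_comp_vOf (polyDeriv puPoly) x).const_mul (6 / (halfLen : ℝ)))).congr_deriv ?_
  rw [y₀dd]; ring

lemma abs_vOf_le {x : ℝ} (h1 : 7/10 ≤ x - x₀) (h2 : x - x₀ ≤ 18942/10000) : |vOf x| ≤ 1 := by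
  rw [abs_le, vOf, halfLen]
  push_cast
  constructor <;> norm_num <;> linarith

lemma pu_bounds {x : ℝ} (h1 : 7/10 ≤ x - x₀) (h2 : x - x₀ ≤ 18942/10000) :
    0 ≤ polyEval puPoly (vOf x) ∧ polyEval puPoly (vOf x) ≤ 3/10 := by
  have h3 := (abs_polyEval_le (polyAdd puPoly [-18/100]) (abs_vOf_le h1 h2)).trans
    (Rat.cast_le.mpr polyNorm_pu)
  rw [polyEval_add] at h3
  simp only [polyEval] at h3
  push_cast at h3
  obtain ⟨h4, h5⟩ := abs_le.mp h3
  constructor <;> linarith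

lemma residual_bound {x : ℝ} (h1 : 7/10 ≤ x - x₀) (h2 : x - x₀ ≤ 18942/10000) :
    (x - x₀) ^ 2 * |y₀dd x + 6 * y₀ x ^ 2 - x| ≤ 2/10^7 := by
  have hs : x - x₀ ≠ 0 := by linarith
  have e1 : polyEval sPoly (vOf x) = x - x₀ := by
    simp only [polyEval, sPoly, vOf, halfLen]; push_cast; ring
  have e2 : polyEval xPoly (vOf x) = x := by
    simp only [polyEval, xPoly, vOf, halfLen, x₀]; push_cast; ring
  have e : (x - x₀) ^ 2 * (y₀dd x + 6 * y₀ x ^ 2 - x) = polyEval resPoly (vOf x) := by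
    rw [y₀_eq, y₀dd, resPoly]
    simp only [polyEval_add, polyEval_mul, polyEval_scale, e1, e2]
    push_cast
    generalize polyEval puPoly (vOf x) = p
    generalize polyEval (polyDeriv (polyDeriv puPoly)) (vOf x) = q
    generalize 6 / (halfLen : ℝ) = k
    field_simp
    ring
  rw [← abs_of_nonneg (sq_nonneg (x - x₀)), ← abs_mul, e]
  exact abs_res_le (abs_vOf_le h1 h2)

/-! ### The barrier argument -/

/-- If every `g i` is positive at the right end point, and each `g i` decreases strictly
wherever it vanishes while all the others are nonnegative, then all `g i` stay positive. -/
lemma barrier_pos {ι : Type*} [Finite ι] {a b : ℝ} {g g' : ι → ℝ → ℝ}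
    (hg : ∀ i, ∀ x ∈ Icc a b, HasDerivWithinAt (g i) (g' i x) (Icc a b) x)
    (hb : ∀ i, 0 < g i b)
    (hneg : ∀ i, ∀ x ∈ Ico a b, (∀ j, 0 ≤ g j x) → g i x = 0 → g' i x < 0) :
    ∀ x ∈ Icc a b, ∀ i, 0 < g i x := by
  by_contra! hcon
  obtain ⟨x₁, hx₁, i₁, hi₁⟩ := hcon
  have hcont : ∀ i, ContinuousOn (g i) (Icc a b) := fun i x hx => (hg i x hx).continuousWithinAt
  have hcomp : IsCompact (⋃ i, Icc a b ∩ g i ⁻¹' Iic 0) := by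
    refine isCompact_iUnion fun i => ?_
    exact isCompact_Icc.of_isClosed_subset
      ((hcont i).preimage_isClosed_of_isClosed isClosed_Icc isClosed_Iic) inter_subset_left
  obtain ⟨z, hz, hmax⟩ := hcomp.exists_isGreatest ⟨x₁, mem_iUnion.mpr ⟨i₁, hx₁, hi₁⟩⟩
  obtain ⟨i, hzI, hi⟩ := mem_iUnion.mp hz
  have hi : g i z ≤ 0 := hi
  have hzb : z < b := lt_of_le_of_ne hzI.2 (by rintro rfl; exact absurd (hb i) (not_lt.mpr hi))
  have hpos : ∀ j, ∀ t ∈ Ioc z b, 0 < g j t := by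
    intro j t ht
    by_contra! hle
    exact absurd (hmax (mem_iUnion.mpr ⟨j, ⟨hzI.1.trans ht.1.le, ht.2⟩, hle⟩)) (not_le.mpr ht.1)
  have hsub : Ioc z b ⊆ Icc a b := fun t ht => ⟨hzI.1.trans ht.1.le, ht.2⟩
  have : (nhdsWithin z (Ioc z b)).NeBot := by
    rw [nhdsWithin_Ioc_eq_nhdsGT hzb]; infer_instance
  have hnn : ∀ j, 0 ≤ g j z := fun j =>
    ge_of_tendsto ((hcont j z hzI).mono hsub)
      (eventually_nhdsWithin_of_forall fun t ht => (hpos j t ht).le)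
  have h0 : g i z = 0 := le_antisymm hi (hnn i)
  have hlt := hneg i z ⟨hzI.1, hzb⟩ hnn h0
  -- the slopes of `g i` to the right of `z` are positive, so its derivative is nonnegative
  have hslope := hasDerivWithinAt_iff_tendsto_slope.mp ((hg i z hzI).mono hsub)
  rw [sdiff_singleton_eq_self (fun h => lt_irrefl z h.1)] at hslope
  have : 0 ≤ g' i z := ge_of_tendsto hslope (eventually_nhdsWithin_of_forall fun t ht => by
    rw [slope_def_field, h0, sub_zero]
    exact (div_pos (hpos i t ht) (sub_pos.mpr ht.1)).le)
  linarith

/-- Bound for the right-hand side `-12 y₀ u - 6 u² - R` of the error equation; here `p` is the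
value of `P_u`. -/
lemma rhs_bound {s u p R : ℝ} (h1 : 7/10 ≤ s) (h2 : s ≤ 18942/10000) (hp0 : 0 ≤ p)
    (hp1 : p ≤ 3/10) (hu : |u| ≤ 2.26e-6 / s ^ 4) (hR : s ^ 2 * |R| ≤ 2/10^7) :
    |-12 * (-1 / s ^ 2 + p) * u - 6 * u ^ 2 - R| < 13.5 * 2.26e-6 / s ^ 6 := by
  have hs : 0 < s := by linarith
  have hs4 : s ^ 4 ≤ (18942/10000) ^ 4 := by gcongr
  have hs2 : s ^ 2 ≤ (18942/10000) ^ 2 := by gcongr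
  have hs2' : (7/10) ^ 2 ≤ s ^ 2 := by gcongr
  have hu' : s ^ 4 * |u| ≤ 2.26e-6 := by
    rw [le_div_iff₀ (by positivity)] at hu; linarith
  -- `|12 y₀| ≤ 12 / s²`, because `0 ≤ p ≤ 2 / s²`
  have hq : |12 - 12 * (s ^ 2 * p)| ≤ 12 := by
    have h3 : 0 ≤ s ^ 2 * p := by positivity
    have h4 : s ^ 2 * p ≤ (18942/10000) ^ 2 * (3/10) := by gcongr
    rw [abs_le]
    constructor <;> linarith
  rw [lt_div_iff₀ (by positivity), ← abs_of_pos (show 0 < s ^ 6 by positivity), ← abs_mul]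
  have e : (-12 * (-1 / s ^ 2 + p) * u - 6 * u ^ 2 - R) * s ^ 6
      = (12 - 12 * (s ^ 2 * p)) * (s ^ 4 * u) - 6 * ((s ^ 4 * u) * (s ^ 2 * u))
        - s ^ 4 * (s ^ 2 * R) := by
    field_simp
    ring
  rw [e]
  have t1 : |(12 - 12 * (s ^ 2 * p)) * (s ^ 4 * u)| ≤ 12 * 2.26e-6 := by
    rw [abs_mul, abs_mul, abs_of_pos (show 0 < s ^ 4 by positivity)]
    gcongr
  have hu2 : |s ^ 2 * u| ≤ 1e-5 := by
    rw [abs_mul, abs_of_pos (show 0 < s ^ 2 by positivity)]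
    have : (7/10) ^ 2 * (s ^ 2 * |u|) ≤ s ^ 2 * (s ^ 2 * |u|) := by gcongr
    have e : s ^ 2 * (s ^ 2 * |u|) = s ^ 4 * |u| := by ring
    linarith
  have t2 : |6 * ((s ^ 4 * u) * (s ^ 2 * u))| ≤ 6 * (2.26e-6 * 1e-5) := by
    rw [abs_mul, abs_mul, abs_of_pos (show (0 : ℝ) < 6 by norm_num)]
    have : |s ^ 4 * u| ≤ 2.26e-6 := by
      rw [abs_mul, abs_of_pos (show 0 < s ^ 4 by positivity)]; exact hu'
    gcongr
  have t3 : |s ^ 4 * (s ^ 2 * R)| ≤ (18942/10000) ^ 4 * (2/10^7) := by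
    rw [abs_mul, abs_mul, abs_of_pos (show 0 < s ^ 4 by positivity),
      abs_of_pos (show 0 < s ^ 2 by positivity)]
    gcongr
  refine ((abs_sub _ _).trans (add_le_add ((abs_sub _ _).trans (add_le_add t1 t2)) t3)).trans_lt ?_
  norm_num

/-- The weight `s^{16/5}` against the barrier `A s⁻⁴`. -/
lemma rpow_weight_le {s : ℝ} (h1 : 7/10 ≤ s) : s ^ ((16 : ℝ) / 5) ≤ 10/7 * s ^ 4 := by
  have hs : 0 < s := by linarith
  rcases le_total 1 s with h | h
  · have h3 : s ^ ((16 : ℝ) / 5) ≤ s ^ ((4 : ℕ) : ℝ) :=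
      Real.rpow_le_rpow_of_exponent_le h (by norm_num)
    rw [Real.rpow_natCast] at h3
    have : 0 < s ^ 4 := by positivity
    linarith
  · have h3 : s ^ ((16 : ℝ) / 5) ≤ s ^ ((3 : ℕ) : ℝ) :=
      Real.rpow_le_rpow_of_exponent_ge hs h (by norm_num)
    rw [Real.rpow_natCast] at h3
    have : 7/10 * s ^ 3 ≤ s * s ^ 3 := by gcongr
    have e : s ^ 4 = s * s ^ 3 := by ring
    linarith

/-- If `y` is a `C²` solution of P-1 on `[x₀+r, L₀]` with
`|y(L₀) - y₀(L₀)| ≤ 1.75×10⁻⁷` and `|y'(L₀) - y₀'(L₀)| ≤ 1.61×10⁻⁷`, then for every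
`x ∈ [x₀+r, L₀]`, `(x-x₀)^{16/5}·|y(x)-y₀(x)| ≤ 4.01×10⁻⁶` and
`|y'(x)-y₀'(x)| ≤ 3.76×10⁻⁵`; in particular `|y(x₀+r)-y₀(x₀+r)| ≤ 1.26×10⁻⁵`. -/
theorem statement16 (y yd ydd : ℝ → ℝ)
    (hy : ∀ x ∈ Icc (x₀ + rP1) L₀, HasDerivWithinAt y (yd x) (Icc (x₀ + rP1) L₀) x)
    (hyd : ∀ x ∈ Icc (x₀ + rP1) L₀, HasDerivWithinAt yd (ydd x) (Icc (x₀ + rP1) L₀) x)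
    (hydd : ContinuousOn ydd (Icc (x₀ + rP1) L₀))
    (hode : ∀ x ∈ Icc (x₀ + rP1) L₀, ydd x + 6 * (y x) ^ 2 - x = 0)
    (hinit : |y L₀ - y₀ L₀| ≤ 1.75e-7)
    (hinitd : |yd L₀ - deriv y₀ L₀| ≤ 1.61e-7) :
    (∀ x ∈ Icc (x₀ + rP1) L₀,
      (x - x₀) ^ ((16 : ℝ) / 5) * |y x - y₀ x| ≤ 4.01e-6 ∧
      |yd x - deriv y₀ x| ≤ 3.76e-5) ∧
    |y (x₀ + rP1) - y₀ (x₀ + rP1)| ≤ 1.26e-5 := by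
  have hlo : ∀ x ∈ Icc (x₀ + rP1) L₀, 7/10 ≤ x - x₀ := fun x hx => by
    have := hx.1; rw [rP1] at this; linarith
  have hhi : ∀ x ∈ Icc (x₀ + rP1) L₀, x - x₀ ≤ 18942/10000 := fun x hx => by
    have := hx.2; rw [L₀] at this; rw [x₀]; linarith
  have hLI : L₀ ∈ Icc (x₀ + rP1) L₀ := ⟨by norm_num [x₀, rP1, L₀], le_rfl⟩
  have haI : x₀ + rP1 ∈ Icc (x₀ + rP1) L₀ := ⟨le_rfl, hLI.1⟩
  have hne : ∀ x ∈ Icc (x₀ + rP1) L₀, x - x₀ ≠ 0 := fun x hx => by linarith [hlo x hx]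
  have hd : ∀ x ∈ Icc (x₀ + rP1) L₀, deriv y₀ x = y₀d x := fun x hx =>
    (hasDerivAt_y₀ (hne x hx)).deriv
  have hu : ∀ x ∈ Icc (x₀ + rP1) L₀,
      HasDerivWithinAt (fun x => y x - y₀ x) (yd x - y₀d x) (Icc (x₀ + rP1) L₀) x := fun x hx =>
    (hy x hx).sub (hasDerivAt_y₀ (hne x hx)).hasDerivWithinAt
  have hw : ∀ x ∈ Icc (x₀ + rP1) L₀,
      HasDerivWithinAt (fun x => yd x - y₀d x) (ydd x - y₀dd x) (Icc (x₀ + rP1) L₀) x :=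
    fun x hx => (hyd x hx).sub (hasDerivAt_y₀d (hne x hx)).hasDerivWithinAt
  have hbar : ∀ (c : ℝ) (n : ℕ), ∀ x ∈ Icc (x₀ + rP1) L₀,
      HasDerivWithinAt (fun x => c / (x - x₀) ^ n) (-(n * c) / (x - x₀) ^ (n + 1))
        (Icc (x₀ + rP1) L₀) x := fun c n x hx =>
    (hasDerivAt_const_div c n (hne x hx)).hasDerivWithinAt
  have key := barrier_pos (a := x₀ + rP1) (b := L₀)
    (g := ![fun x => 2.26e-6 / (x - x₀) ^ 4 - (y x - y₀ x),
      fun x => 2.26e-6 / (x - x₀) ^ 4 + (y x - y₀ x),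
      fun x => 2.7 * 2.26e-6 / (x - x₀) ^ 5 - (yd x - y₀d x),
      fun x => 2.7 * 2.26e-6 / (x - x₀) ^ 5 + (yd x - y₀d x)])
    (g' := ![fun x => -((4 : ℕ) * 2.26e-6) / (x - x₀) ^ 5 - (yd x - y₀d x),
      fun x => -((4 : ℕ) * 2.26e-6) / (x - x₀) ^ 5 + (yd x - y₀d x),
      fun x => -((5 : ℕ) * (2.7 * 2.26e-6)) / (x - x₀) ^ 6 - (ydd x - y₀dd x),
      fun x => -((5 : ℕ) * (2.7 * 2.26e-6)) / (x - x₀) ^ 6 + (ydd x - y₀dd x)])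
    (by
      intro i x hx
      fin_cases i
      · exact (hbar _ 4 x hx).sub (hu x hx)
      · exact (hbar _ 4 x hx).add (hu x hx)
      · exact (hbar _ 5 x hx).sub (hw x hx)
      · exact (hbar _ 5 x hx).add (hw x hx))
    (by
      rw [hd L₀ hLI] at hinitd
      obtain ⟨h1, h2⟩ := abs_le.mp hinit
      obtain ⟨h3, h4⟩ := abs_le.mp hinitd
      have h5 : (1.75e-7 : ℝ) < 2.26e-6 / (L₀ - x₀) ^ 4 := by norm_num [L₀, x₀]
      have h6 : (1.61e-7 : ℝ) < 2.7 * 2.26e-6 / (L₀ - x₀) ^ 5 := by norm_num [L₀, x₀]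
      intro i
      fin_cases i
      · change 0 < 2.26e-6 / (L₀ - x₀) ^ 4 - (y L₀ - y₀ L₀); linarith
      · change 0 < 2.26e-6 / (L₀ - x₀) ^ 4 + (y L₀ - y₀ L₀); linarith
      · change 0 < 2.7 * 2.26e-6 / (L₀ - x₀) ^ 5 - (yd L₀ - y₀d L₀); linarith
      · change 0 < 2.7 * 2.26e-6 / (L₀ - x₀) ^ 5 + (yd L₀ - y₀d L₀); linarith)
    (by
      intro i x hx hall _
      have hxI := Ico_subset_Icc_self hx
      have hs : 0 < x - x₀ := by linarith [hlo x hxI]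
      have a0 : 0 ≤ 2.26e-6 / (x - x₀) ^ 4 - (y x - y₀ x) := hall 0
      have a1 : 0 ≤ 2.26e-6 / (x - x₀) ^ 4 + (y x - y₀ x) := hall 1
      have a2 : 0 ≤ 2.7 * 2.26e-6 / (x - x₀) ^ 5 - (yd x - y₀d x) := hall 2
      have a3 : 0 ≤ 2.7 * 2.26e-6 / (x - x₀) ^ 5 + (yd x - y₀d x) := hall 3
      have e5 : (2.7 * 2.26e-6 : ℝ) / (x - x₀) ^ 5 < -(-((4 : ℕ) * 2.26e-6) / (x - x₀) ^ 5) := by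
        rw [neg_div, neg_neg]
        gcongr
        norm_num
      have hpu := pu_bounds (hlo x hxI) (hhi x hxI)
      have hrhs := rhs_bound (hlo x hxI) (hhi x hxI) hpu.1 hpu.2
        (abs_le.mpr ⟨by linarith, by linarith⟩ : |y x - y₀ x| ≤ 2.26e-6 / (x - x₀) ^ 4)
        (residual_bound (hlo x hxI) (hhi x hxI))
      -- the error equation
      have herr : ydd x - y₀dd x = -12 * (-1 / (x - x₀) ^ 2 + polyEval puPoly (vOf x))
          * (y x - y₀ x) - 6 * (y x - y₀ x) ^ 2 - (y₀dd x + 6 * y₀ x ^ 2 - x) := by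
        rw [← y₀_eq]
        linear_combination hode x hxI
      rw [← herr] at hrhs
      obtain ⟨b1, b2⟩ := abs_lt.mp hrhs
      have e6 : (-((5 : ℕ) * (2.7 * 2.26e-6)) : ℝ) / (x - x₀) ^ 6
          = -(13.5 * 2.26e-6 / (x - x₀) ^ 6) := by
        rw [neg_div]; norm_num
      fin_cases i
      · change -((4 : ℕ) * 2.26e-6) / (x - x₀) ^ 5 - (yd x - y₀d x) < 0; linarith
      · change -((4 : ℕ) * 2.26e-6) / (x - x₀) ^ 5 + (yd x - y₀d x) < 0; linarith
      · change -((5 : ℕ) * (2.7 * 2.26e-6)) / (x - x₀) ^ 6 - (ydd x - y₀dd x) < 0; linarith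
      · change -((5 : ℕ) * (2.7 * 2.26e-6)) / (x - x₀) ^ 6 + (ydd x - y₀dd x) < 0; linarith)
  have hU : ∀ x ∈ Icc (x₀ + rP1) L₀, |y x - y₀ x| ≤ 2.26e-6 / (x - x₀) ^ 4 := fun x hx => by
    have a0 : 0 < 2.26e-6 / (x - x₀) ^ 4 - (y x - y₀ x) := key x hx 0
    have a1 : 0 < 2.26e-6 / (x - x₀) ^ 4 + (y x - y₀ x) := key x hx 1
    exact abs_le.mpr ⟨by linarith, by linarith⟩
  have hW : ∀ x ∈ Icc (x₀ + rP1) L₀, |yd x - y₀d x| ≤ 2.7 * 2.26e-6 / (x - x₀) ^ 5 :=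
    fun x hx => by
      have a2 : 0 < 2.7 * 2.26e-6 / (x - x₀) ^ 5 - (yd x - y₀d x) := key x hx 2
      have a3 : 0 < 2.7 * 2.26e-6 / (x - x₀) ^ 5 + (yd x - y₀d x) := key x hx 3
      exact abs_le.mpr ⟨by linarith, by linarith⟩
  refine ⟨fun x hx => ⟨?_, ?_⟩, ?_⟩
  · have hs : 0 < x - x₀ := by linarith [hlo x hx]
    calc (x - x₀) ^ ((16 : ℝ) / 5) * |y x - y₀ x|
        ≤ (10/7 * (x - x₀) ^ 4) * (2.26e-6 / (x - x₀) ^ 4) := by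
          gcongr
          · exact rpow_weight_le (hlo x hx)
          · exact hU x hx
      _ = 10/7 * 2.26e-6 := by field_simp
      _ ≤ 4.01e-6 := by norm_num
  · rw [hd x hx]
    calc |yd x - y₀d x| ≤ 2.7 * 2.26e-6 / (x - x₀) ^ 5 := hW x hx
      _ ≤ 2.7 * 2.26e-6 / (7/10) ^ 5 := by gcongr; exact hlo x hx
      _ ≤ 3.76e-5 := by norm_num
  · calc |y (x₀ + rP1) - y₀ (x₀ + rP1)| ≤ 2.26e-6 / (x₀ + rP1 - x₀) ^ 4 := hU _ haI
      _ ≤ 2.26e-6 / (7/10) ^ 4 := by gcongr; exact hlo _ haI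
      _ ≤ 1.26e-5 := by norm_num

end
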